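/- Let p = p(n) ∈ [0,1] satisfy p(n)·(log n)^{1/3} → ∞ as n → ∞ and limsup_{n→∞} p(n) < 1/2. Then asymptotically almost surely, every orientation of the binomial random graph G(n,p) contains a Sullivan vertex. -/

import Mathlib

open Filter

/-- The outneighbourhood `N1(v)` of `v` in the digraph with arc relation `D`. -/
def outNbr {V : Type*} (D : V → V → Prop) (v : V) : Set V := {w | w ≠ v ∧ D v w}

/-- The inneighbourhood `N⁻(v)` of `v`. -/
def inNbr {V : Type*} (D : V → V → Prop) (v : V) : Set V := {w | w ≠ v ∧ D w v}

/-- The second outneighbourhood `N2(v)` of `v`. -/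
def outNbr2 {V : Type*} (D : V → V → Prop) (v : V) : Set V :=
  {w | w ∉ insert v (outNbr D v) ∧ ∃ u ∈ outNbr D v, D u w}

/-- `v` is a Seymour vertex: `|N2(v)| ≥ |N1(v)|`. -/
def SeymourVertex {V : Type*} (D : V → V → Prop) (v : V) : Prop :=
  (outNbr D v).ncard ≤ (outNbr2 D v).ncard

/-- `v` is a Sullivan vertex: `|N2(v)| ≥ |N⁻(v)|`. -/
def SullivanVertex {V : Type*} (D : V → V → Prop) (v : V) : Prop :=
  (inNbr D v).ncard ≤ (outNbr2 D v).ncard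

/-- An oriented graph: an asymmetric (hence irreflexive and loopless) arc relation. -/
def OrientedGraph {V : Type*} (D : V → V → Prop) : Prop := ∀ u v, D u v → ¬ D v u

/-- `D` is an orientation of the simple graph `G`. -/
def Orients {V : Type*} (D : V → V → Prop) (G : SimpleGraph V) : Prop :=
  OrientedGraph D ∧ ∀ u v, G.Adj u v ↔ (D u v ∨ D v u)

/-- Strong connectivity of a digraph: every vertex reaches every other by a directed path. -/
def StrongConn {V : Type*} (D : V → V → Prop) : Prop := ∀ u v, Relation.ReflTransGen D u v

/-- The number of edges of `G` with one endpoint in `A` and the other in `B`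
(counted via ordered pairs; equals `e(A,B)` for disjoint `A`, `B`). -/
noncomputable def eBtw {V : Type*} (G : SimpleGraph V) (A B : Set V) : ℕ :=
  {p : V × V | p.1 ∈ A ∧ p.2 ∈ B ∧ G.Adj p.1 p.2}.ncard

/-- The number of edges of `G` with both endpoints in `A`. -/
noncomputable def eIn {V : Type*} (G : SimpleGraph V) (A : Set V) : ℕ :=
  {e | e ∈ G.edgeSet ∧ ∀ v ∈ e, v ∈ A}.ncard

open scoped Classical in
/-- The probability that the binomial random graph `G(n,p)` satisfies the property `P`. -/
noncomputable def gnpProb (n : ℕ) (p : ℝ) (P : SimpleGraph (Fin n) → Prop) : ℝ :=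
  ∑ G : SimpleGraph (Fin n),
    if P G then p ^ G.edgeSet.ncard * (1 - p) ^ (n.choose 2 - G.edgeSet.ncard) else 0

/-! ### Probability part -/

open scoped Classical in
noncomputable def eF {n : ℕ} (G : SimpleGraph (Fin n)) : Finset (Sym2 (Fin n)) :=
  Finset.univ.filter (fun e => e ∈ G.edgeSet)

open scoped Classical in
noncomputable def allE (n : ℕ) : Finset (Sym2 (Fin n)) :=
  Finset.univ.filter (fun e => ¬ e.IsDiag)

lemma card_allE (n : ℕ) : (allE n).card = n.choose 2 := by
  classical
  have h := Sym2.card_subtype_not_diag (α := Fin n)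
  rw [Fintype.card_fin, Fintype.card_subtype] at h
  rw [← h, allE]

lemma ncard_edge {n : ℕ} (G : SimpleGraph (Fin n)) : G.edgeSet.ncard = (eF G).card := by
  classical
  rw [← Set.ncard_coe_finset]
  congr 1
  ext e
  simp [eF]

lemma eF_sub {n : ℕ} (G : SimpleGraph (Fin n)) : eF G ⊆ allE n := by
  classical
  intro e he
  simp only [eF, allE, Finset.mem_filter, Finset.mem_univ, true_and] at *
  exact G.not_isDiag_of_mem_edgeSet he

noncomputable def wt {n : ℕ} (p : ℝ) (G : SimpleGraph (Fin n)) : ℝ :=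
  p ^ G.edgeSet.ncard * (1 - p) ^ (n.choose 2 - G.edgeSet.ncard)

lemma wt_nonneg {n : ℕ} {p : ℝ} (hp : p ∈ Set.Icc (0 : ℝ) 1) (G : SimpleGraph (Fin n)) :
    0 ≤ wt p G := mul_nonneg (pow_nonneg hp.1 _) (pow_nonneg (by linarith [hp.2]) _)

lemma sum_graph {n : ℕ} (p : ℝ) (f : Finset (Sym2 (Fin n)) → ℝ) :
    ∑ G : SimpleGraph (Fin n), wt p G * f (eF G) =
      ∑ T ∈ (allE n).powerset, p ^ T.card * (1 - p) ^ ((allE n).card - T.card) * f T := by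
  classical
  refine Finset.sum_bij (fun G _ => eF G) ?_ ?_ ?_ ?_
  · intro G _
    exact Finset.mem_powerset.2 (eF_sub G)
  · intro G _ G' _ h
    apply SimpleGraph.edgeSet_injective
    ext e
    have := congrArg (fun T => e ∈ T) h
    simpa [eF] using this
  · intro T hT
    refine ⟨SimpleGraph.fromEdgeSet (T : Set _), Finset.mem_univ _, ?_⟩
    ext e
    have hT' := Finset.mem_powerset.1 hT
    simp only [eF, Finset.mem_filter, Finset.mem_univ, true_and, SimpleGraph.edgeSet_fromEdgeSet]
    constructor
    · rintro ⟨h, _⟩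
      exact h
    · intro h
      refine ⟨h, ?_⟩
      have := hT' h
      simpa [allE] using this
  · intro G _
    simp only [wt, ncard_edge, card_allE]

lemma sum_prod {n : ℕ} (p : ℝ) (g : Sym2 (Fin n) → ℝ) :
    ∑ G : SimpleGraph (Fin n), wt p G * ∏ e ∈ eF G, g e =
      ∏ e ∈ allE n, (p * g e + (1 - p)) := by
  classical
  rw [sum_graph p (fun T => ∏ e ∈ T, g e), Finset.prod_add]
  refine Finset.sum_congr rfl fun T hT => ?_
  rw [Finset.prod_mul_distrib, Finset.prod_const, Finset.prod_const,
    Finset.card_sdiff_of_subset (Finset.mem_powerset.1 hT)]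
  ring

lemma sum_wt {n : ℕ} (p : ℝ) : ∑ G : SimpleGraph (Fin n), wt p G = 1 := by
  have := sum_prod (n := n) p (fun _ => 1)
  simpa using this

open scoped Classical in
lemma mgf {n : ℕ} {p : ℝ} (hp : p ∈ Set.Icc (0 : ℝ) 1) (S : Finset (Sym2 (Fin n)))
    (hS : S ⊆ allE n) (t : ℝ) (ht : |t| ≤ 1) :
    ∑ G : SimpleGraph (Fin n), wt p G * Real.exp (t * ((eF G ∩ S).card : ℝ)) ≤
      Real.exp (p * S.card * (t + t ^ 2)) := by
  have h1 : ∀ G : SimpleGraph (Fin n), Real.exp (t * ((eF G ∩ S).card : ℝ)) =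
      ∏ e ∈ eF G, (if e ∈ S then Real.exp t else 1) := by
    intro G
    rw [Finset.prod_ite_mem, Finset.prod_const, ← Real.exp_nat_mul]
    ring_nf
  simp_rw [h1]
  rw [sum_prod]
  have hexp : Real.exp t - 1 ≤ t + t ^ 2 := by
    have := (abs_le.1 (Real.abs_exp_sub_one_sub_id_le ht)).2
    linarith
  calc _ ≤ ∏ e ∈ allE n, (if e ∈ S then Real.exp (p * (t + t ^ 2)) else 1) := by
        apply Finset.prod_le_prod
        · intro e _
          split_ifs
          · have := mul_nonneg hp.1 (Real.exp_pos t).le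
            linarith [hp.2]
          · linarith [hp.2]
        · intro e _
          split_ifs
          · have h2 := Real.add_one_le_exp (p * (t + t ^ 2))
            have h3 := mul_le_mul_of_nonneg_left hexp hp.1
            nlinarith
          · linarith
    _ = _ := by
        rw [Finset.prod_ite_mem, Finset.inter_eq_right.2 hS, Finset.prod_const, ← Real.exp_nat_mul]
        ring_nf

open scoped Classical in
noncomputable def pr {n : ℕ} (p : ℝ) (P : SimpleGraph (Fin n) → Prop) : ℝ :=
  ∑ G : SimpleGraph (Fin n), if P G then wt p G else 0

lemma gnpProb_eq (n : ℕ) (p : ℝ) (P : SimpleGraph (Fin n) → Prop) :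
    gnpProb n p P = pr p P := rfl

lemma pr_mono {n : ℕ} {p : ℝ} (hp : p ∈ Set.Icc (0 : ℝ) 1) {P Q : SimpleGraph (Fin n) → Prop}
    (h : ∀ G, P G → Q G) : pr p P ≤ pr p Q := by
  classical
  apply Finset.sum_le_sum
  intro G _
  have := wt_nonneg hp G
  by_cases h1 : P G
  · simp [h1, h G h1]
  · simp only [h1, if_false]
    split_ifs <;> linarith

lemma pr_le_one {n : ℕ} {p : ℝ} (hp : p ∈ Set.Icc (0 : ℝ) 1) (P : SimpleGraph (Fin n) → Prop) :
    pr p P ≤ 1 := by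
  have : pr p P ≤ pr p (fun _ => True) := pr_mono hp (fun _ _ => trivial)
  refine this.trans ?_
  simp [pr, sum_wt]

lemma pr_not {n : ℕ} (p : ℝ) (P : SimpleGraph (Fin n) → Prop) :
    pr p P = 1 - pr p (fun G => ¬ P G) := by
  classical
  rw [eq_sub_iff_add_eq, ← sum_wt (n := n) p, pr, pr, ← Finset.sum_add_distrib]
  refine Finset.sum_congr rfl fun G _ => ?_
  by_cases h : P G <;> simp [h]

lemma pr_or {n : ℕ} {p : ℝ} (hp : p ∈ Set.Icc (0 : ℝ) 1) (P Q : SimpleGraph (Fin n) → Prop) :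
    pr p (fun G => P G ∨ Q G) ≤ pr p P + pr p Q := by
  classical
  rw [pr, pr, pr, ← Finset.sum_add_distrib]
  refine Finset.sum_le_sum fun G _ => ?_
  have := wt_nonneg hp G
  by_cases h : P G <;> by_cases h' : Q G <;> simp [h, h', this]

lemma pr_exists {n : ℕ} {p : ℝ} (hp : p ∈ Set.Icc (0 : ℝ) 1) {ι : Type*} [Fintype ι]
    (P : ι → SimpleGraph (Fin n) → Prop) (b : ℝ) (hb : ∀ i, pr p (P i) ≤ b) :
    pr p (fun G => ∃ i, P i G) ≤ Fintype.card ι * b := by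
  classical
  calc pr p (fun G => ∃ i, P i G) ≤ ∑ i, pr p (P i) := by
        simp only [pr]
        rw [Finset.sum_comm]
        refine Finset.sum_le_sum fun G _ => ?_
        have hw := wt_nonneg hp G
        split_ifs with h
        · obtain ⟨i, hi⟩ := h
          calc wt p G = if P i G then wt p G else 0 := by simp [hi]
            _ ≤ _ := Finset.single_le_sum (f := fun i => if P i G then wt p G else 0)
              (fun j _ => by split_ifs <;> simp [hw]) (Finset.mem_univ i)
        · exact Finset.sum_nonneg (fun j _ => by split_ifs <;> simp [hw])
    _ ≤ ∑ _i : ι, b := Finset.sum_le_sum fun i _ => hb i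
    _ = _ := by simp

open scoped Classical in
lemma markov {n : ℕ} {p : ℝ} (hp : p ∈ Set.Icc (0 : ℝ) 1) (S : Finset (Sym2 (Fin n)))
    (hS : S ⊆ allE n) (t a : ℝ) (ht : |t| ≤ 1) (P : SimpleGraph (Fin n) → Prop)
    (hP : ∀ G, P G → a ≤ t * ((eF G ∩ S).card : ℝ)) :
    pr p P ≤ Real.exp (p * S.card * (t + t ^ 2) - a) := by
  rw [sub_eq_add_neg, Real.exp_add]
  refine le_trans ?_ (mul_le_mul_of_nonneg_right (mgf hp S hS t ht) (Real.exp_pos _).le)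
  rw [Finset.sum_mul, pr]
  refine Finset.sum_le_sum fun G _ => ?_
  have hw := wt_nonneg hp G
  rw [mul_assoc, ← Real.exp_add]
  split_ifs with h
  · have : 1 ≤ Real.exp (t * ((eF G ∩ S).card : ℝ) + -a) := Real.one_le_exp (by linarith [hP G h])
    nlinarith
  · positivity

open scoped Classical in
noncomputable def SS {n : ℕ} (Y Z : Finset (Fin n)) : Finset (Sym2 (Fin n)) :=
  ((Y ×ˢ Z).image (fun q => s(q.1, q.2))).filter (fun e => ¬ e.IsDiag)

lemma SS_sub {n : ℕ} (Y Z : Finset (Fin n)) : SS Y Z ⊆ allE n := by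
  intro e he
  simp only [SS, allE, Finset.mem_filter, Finset.mem_univ, true_and] at *
  exact he.2

open scoped Classical in
def Good {n : ℕ} (ε p : ℝ) (G : SimpleGraph (Fin n)) : Prop :=
  (∀ v, (((eF G ∩ SS {v} Finset.univ).card : ℕ) : ℝ) ≤ (1 + ε) * p * n) ∧
  ∀ Y Z : Finset (Fin n), 8 * n / ε ^ 2 ≤ p * (SS Y Z).card →
    (1 - ε) * p * (SS Y Z).card ≤ (((eF G ∩ SS Y Z).card : ℕ) : ℝ)

lemma good_prob {n : ℕ} {p ε : ℝ} (hp : p ∈ Set.Icc (0 : ℝ) 1) (h0 : 0 < ε) (h1 : ε ≤ 1) :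
    1 - (n * Real.exp (-(ε ^ 2 * p * n / 4)) + (4 * Real.exp (-2)) ^ n) ≤
      pr (n := n) p (Good ε p) := by
  classical
  rw [pr_not]
  apply sub_le_sub_left
  let P1 : Fin n → SimpleGraph (Fin n) → Prop := fun v G =>
    (1 + ε) * p * n ≤ (((eF G ∩ SS {v} Finset.univ).card : ℕ) : ℝ)
  let P2 : (Finset (Fin n) × Finset (Fin n)) → SimpleGraph (Fin n) → Prop := fun q G =>
    8 * n / ε ^ 2 ≤ p * (SS q.1 q.2).card ∧
      (((eF G ∩ SS q.1 q.2).card : ℕ) : ℝ) ≤ (1 - ε) * p * (SS q.1 q.2).card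
  have b1 : ∀ v, pr p (P1 v) ≤ Real.exp (-(ε ^ 2 * p * n / 4)) := by
    intro v
    refine (markov hp (SS {v} Finset.univ) (SS_sub _ _) (ε / 2) (ε / 2 * ((1 + ε) * p * n))
      (by rw [abs_of_pos] <;> linarith) _ ?_).trans ?_
    · intro G hG
      exact mul_le_mul_of_nonneg_left hG (by linarith)
    · apply Real.exp_le_exp.2
      have hc : ((SS {v} (Finset.univ : Finset (Fin n))).card : ℝ) ≤ n := by
        have : (SS {v} (Finset.univ : Finset (Fin n))).card ≤ n := by
          refine (Finset.card_filter_le _ _).trans (Finset.card_image_le.trans ?_)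
          simp
        exact_mod_cast this
      have : p * (SS {v} (Finset.univ : Finset (Fin n))).card * (ε / 2 + (ε / 2) ^ 2) ≤
        p * n * (ε / 2 + (ε / 2) ^ 2) := by
        gcongr
        exact hp.1
      nlinarith
  have b2 : ∀ q, pr p (P2 q) ≤ Real.exp (-(2 * n)) := by
    intro q
    by_cases hq : 8 * n / ε ^ 2 ≤ p * (SS q.1 q.2).card
    · refine (markov hp (SS q.1 q.2) (SS_sub _ _) (-(ε / 2))
        (-(ε / 2) * ((1 - ε) * p * (SS q.1 q.2).card))
        (by rw [abs_neg, abs_of_pos] <;> linarith) _ ?_).trans ?_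
      · intro G hG
        exact mul_le_mul_of_nonpos_left hG.2 (by linarith)
      · apply Real.exp_le_exp.2
        rw [div_le_iff₀ (by positivity)] at hq
        nlinarith
    · have : pr p (P2 q) = 0 := by simp [pr, P2, hq]
      rw [this]
      positivity
  have key : pr p (fun G : SimpleGraph (Fin n) => ¬ Good ε p G) ≤
      pr p (fun G => (∃ v, P1 v G) ∨ (∃ q, P2 q G)) := by
    apply pr_mono hp
    intro G hG
    by_contra! hcon
    apply hG
    refine ⟨fun v => ?_, fun Y Z h => ?_⟩
    · have := hcon.1 v
      simp only [P1, not_le] at this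
      exact this.le
    · have := hcon.2 (Y, Z)
      simp only [P2, not_and, not_le] at this
      exact (this h).le
  refine key.trans ((pr_or hp _ _).trans (add_le_add ?_ ?_))
  · simpa using pr_exists hp P1 _ b1
  · refine (pr_exists hp P2 _ b2).trans (le_of_eq ?_)
    simp only [Fintype.card_prod, Fintype.card_finset, Fintype.card_fin]
    rw [mul_pow, ← Real.exp_nat_mul]
    push_cast
    rw [← mul_pow]
    norm_num
    ring

/-! ### Deterministic part -/

lemma card_SS_disj {n : ℕ} (Y Z : Finset (Fin n)) (h : Disjoint Y Z) :
    (SS Y Z).card = Y.card * Z.card := by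
  classical
  have hd := Finset.disjoint_left.1 h
  rw [SS, Finset.filter_true_of_mem, Finset.card_image_of_injOn, Finset.card_product]
  · rintro ⟨a, b⟩ hab ⟨c, d⟩ hcd heq
    simp only [Finset.coe_product, Set.mem_prod, Finset.mem_coe] at hab hcd
    simp only [Sym2.eq_iff] at heq
    rcases heq with ⟨h1, h2⟩ | ⟨h1, h2⟩
    · rw [h1, h2]
    · subst h1
      exact absurd hcd.2 (hd hab.1)
  · intro e he
    simp only [Finset.mem_image, Finset.mem_product, Prod.exists] at he
    obtain ⟨a, b, ⟨ha, hb⟩, rfl⟩ := he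
    simp only [Sym2.mk_isDiag_iff]
    rintro rfl
    exact hd ha hb

lemma card_SS_self {n : ℕ} (A : Finset (Fin n)) :
    ((SS A A).card : ℝ) = A.card * (A.card - 1) / 2 := by
  classical
  rw [← Nat.cast_choose_two, ← Sym2.card_image_offDiag]
  congr 2
  ext e
  induction e with | _ a b =>
  simp only [SS, Finset.mem_filter, Finset.mem_image, Finset.mem_product, Prod.exists,
    Finset.mem_offDiag, Sym2.mk_isDiag_iff]
  constructor
  · rintro ⟨⟨x, y, ⟨hx, hy⟩, h⟩, hne⟩
    refine ⟨x, y, ⟨hx, hy, ?_⟩, h⟩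
    rintro rfl
    rw [Sym2.eq_iff] at h
    apply hne
    rcases h with ⟨h1, h2⟩ | ⟨h1, h2⟩ <;> rw [← h1, ← h2]
  · rintro ⟨x, y, ⟨hx, hy, hne⟩, h⟩
    refine ⟨⟨x, y, ⟨hx, hy⟩, h⟩, ?_⟩
    rintro rfl
    replace h : s(x, y) = s(a, a) := h
    rw [Sym2.eq_iff] at h
    apply hne
    rcases h with ⟨h1, h2⟩ | ⟨h1, h2⟩ <;> rw [h1, h2]

open scoped Classical in
noncomputable def oF {n : ℕ} (D : Fin n → Fin n → Prop) (v : Fin n) : Finset (Fin n) :=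
  Finset.univ.filter (fun w => D v w)

open scoped Classical in
noncomputable def iF {n : ℕ} (D : Fin n → Fin n → Prop) (v : Fin n) : Finset (Fin n) :=
  Finset.univ.filter (fun w => D w v)

open scoped Classical in
noncomputable def o2F {n : ℕ} (D : Fin n → Fin n → Prop) (v : Fin n) : Finset (Fin n) :=
  Finset.univ.filter (fun w => w ∈ outNbr2 D v)

lemma dIrrefl {n : ℕ} {D : Fin n → Fin n → Prop} (h : OrientedGraph D) (v : Fin n) :
    ¬ D v v := fun hv => h v v hv hv

lemma not_sull {n : ℕ} {D : Fin n → Fin n → Prop} (h : OrientedGraph D) (v : Fin n)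
    (hv : ¬ SullivanVertex D v) : (o2F D v).card < (iF D v).card := by
  classical
  have e1 : (outNbr2 D v).ncard = (o2F D v).card := by
    rw [← Set.ncard_coe_finset]
    congr 1
    ext e
    simp [o2F]
  have e2 : (inNbr D v).ncard = (iF D v).card := by
    rw [← Set.ncard_coe_finset]
    congr 1
    ext e
    simp only [inNbr, Set.mem_ofPred_eq, iF, Finset.coe_filter, Finset.mem_univ, true_and,
      and_iff_right_iff_imp]
    rintro he rfl
    exact dIrrefl h _ he
  rw [SullivanVertex, e1, e2] at hv
  omega

open scoped Classical in
lemma deg_le {n : ℕ} {D : Fin n → Fin n → Prop} {G : SimpleGraph (Fin n)} (h : Orients D G)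
    (v : Fin n) : (oF D v).card + (iF D v).card ≤ (eF G ∩ SS {v} Finset.univ).card := by
  have hd : Disjoint (oF D v) (iF D v) := by
    rw [Finset.disjoint_left]
    intro a ha hb
    simp only [oF, iF, Finset.mem_filter, Finset.mem_univ, true_and] at ha hb
    exact h.1 _ _ ha hb
  rw [← Finset.card_union_of_disjoint hd]
  apply Finset.card_le_card_of_injOn (fun u => s(v, u))
  · intro u hu
    have hadj : G.Adj v u := by
      rw [h.2]
      simpa [oF, iF] using hu
    simp [eF, SS, hadj, hadj.ne]
  · intro a _ b _ hab
    rcases Sym2.eq_iff.1 hab with ⟨_, h⟩ | ⟨h1, h2⟩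
    · exact h
    · rw [h2, h1]

open scoped Classical in
lemma arcs_disj {n : ℕ} {D : Fin n → Fin n → Prop} {G : SimpleGraph (Fin n)} (h : Orients D G)
    (Y Z : Finset (Fin n)) (hno : ∀ y ∈ Y, ∀ z ∈ Z, ¬ D y z) :
    (eF G ∩ SS Y Z).card ≤ ∑ y ∈ Y, (iF D y).card := by
  have hsub : eF G ∩ SS Y Z ⊆ Y.biUnion (fun y => (iF D y).image (fun z => s(y, z))) := by
    intro e he
    simp only [eF, SS, Finset.mem_inter, Finset.mem_filter, Finset.mem_univ, true_and,
      Finset.mem_image, Finset.mem_product, Prod.exists] at he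
    obtain ⟨h1, ⟨y, z, ⟨hy, hz⟩, rfl⟩, _⟩ := he
    rw [SimpleGraph.mem_edgeSet, h.2] at h1
    have := h1.resolve_left (hno y hy z hz)
    simp only [Finset.mem_biUnion, Finset.mem_image]
    exact ⟨y, hy, z, by simpa [iF] using this, rfl⟩
  exact (Finset.card_le_card hsub).trans (Finset.card_biUnion_le.trans
    (Finset.sum_le_sum fun y _ => Finset.card_image_le))

open scoped Classical in
lemma arcs_self {n : ℕ} {D : Fin n → Fin n → Prop} {G : SimpleGraph (Fin n)} (h : Orients D G)
    (A : Finset (Fin n)) :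
    (eF G ∩ SS A A).card ≤ ∑ a ∈ A, (oF D a ∩ A).card := by
  have hsub : eF G ∩ SS A A ⊆ A.biUnion (fun y => (oF D y ∩ A).image (fun z => s(y, z))) := by
    intro e he
    simp only [eF, SS, Finset.mem_inter, Finset.mem_filter, Finset.mem_univ, true_and,
      Finset.mem_image, Finset.mem_product, Prod.exists] at he
    obtain ⟨h1, ⟨y, z, ⟨hy, hz⟩, rfl⟩, _⟩ := he
    rw [SimpleGraph.mem_edgeSet, h.2] at h1
    simp only [Finset.mem_biUnion, Finset.mem_image, Finset.mem_inter]
    rcases h1 with h1 | h1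
    · exact ⟨y, hy, z, ⟨by simpa [oF] using h1, hz⟩, rfl⟩
    · exact ⟨z, hz, y, ⟨by simpa [oF] using h1, hy⟩, Sym2.eq_swap⟩
  exact (Finset.card_le_card hsub).trans (Finset.card_biUnion_le.trans
    (Finset.sum_le_sum fun y _ => Finset.card_image_le))

set_option maxHeartbeats 2000000 in
lemma determ {n : ℕ} {β p : ℝ} (hβ : 0 < β) (hβ2 : β ≤ 1 / 2) (hp : 0 < p) (hpb : p ≤ 1 / 2 - β)
    (hbig : 10 ^ 6 < β ^ 4 * (p ^ 2 * n)) {G : SimpleGraph (Fin n)} (hG : Good (β / 8) p G)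
    {D : Fin n → Fin n → Prop} (hD : Orients D G) : ∃ v, SullivanVertex D v := by
  classical
  by_contra! hcon
  obtain ⟨hG1, hG2⟩ := hG
  have hn0 : (0 : ℝ) < n := by
    by_contra hn
    have : β ^ 4 * (p ^ 2 * n) ≤ 0 := by
      have : (0 : ℝ) ≤ β ^ 4 * p ^ 2 := by positivity
      nlinarith
    linarith
  have hdeg : ∀ v, ((oF D v).card : ℝ) + (iF D v).card ≤ (1 + β / 8) * p * n := by
    intro v
    refine le_trans ?_ (hG1 v)
    exact_mod_cast deg_le hD v
  set κ : ℝ := 1 / 2 - β / 2 with hκ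
  set H : Finset (Fin n) := Finset.univ.filter (fun u => κ * p * n ≤ (oF D u).card) with hH
  set L : Finset (Fin n) := Finset.univ.filter (fun u => ¬ κ * p * n ≤ (oF D u).card) with hL
  have hHL : (H.card : ℝ) + L.card = n := by
    have := Finset.card_filter_add_card_filter_not (s := (Finset.univ : Finset (Fin n)))
      (fun u => κ * p * n ≤ (oF D u).card)
    rw [Finset.card_univ, Fintype.card_fin] at this
    exact_mod_cast this
  -- few out-neighbours in H
  have hfew : ∀ v, p * ((oF D v ∩ H).card : ℝ) < 32 / (β / 8) ^ 2 := by
    intro v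
    by_contra! hs
    set Y := oF D v ∩ H with hY
    set Z : Finset (Fin n) := (insert v (oF D v ∪ o2F D v))ᶜ with hZ
    have hZc : (1 - (1 + β / 8) * p) * n ≤ (Z.card : ℝ) := by
      have h1 : (insert v (oF D v ∪ o2F D v)).card ≤ (oF D v).card + (o2F D v).card + 1 :=
        (Finset.card_insert_le _ _).trans (Nat.add_le_add_right (Finset.card_union_le _ _) 1)
      have h2 := not_sull hD.1 v (hcon v)
      have h3 : Z.card + (insert v (oF D v ∪ o2F D v)).card = n := by
        rw [hZ, Finset.card_compl_add_card, Fintype.card_fin]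
      have h4 : n ≤ Z.card + (oF D v).card + (iF D v).card := by omega
      have h4' : (n : ℝ) ≤ Z.card + (oF D v).card + (iF D v).card := by exact_mod_cast h4
      linarith [hdeg v]
    have hdisj : Disjoint Y Z := by
      rw [Finset.disjoint_left]
      intro a ha hb
      simp only [hY, hZ, Finset.mem_inter, Finset.mem_compl, Finset.mem_insert,
        Finset.mem_union, not_or] at ha hb
      exact hb.2.1 ha.1
    have hno : ∀ y ∈ Y, ∀ z ∈ Z, ¬ D y z := by
      intro y hy z hz hyz
      simp only [hY, hZ, Finset.mem_inter, Finset.mem_compl, Finset.mem_insert,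
        Finset.mem_union, not_or] at hy hz
      have hvy : D v y := by simpa [oF] using hy.1
      have hvz : ¬ D v z := by simpa [oF] using hz.2.1
      apply hz.2.2
      refine Finset.mem_filter.2 ⟨Finset.mem_univ _, ?_⟩
      refine ⟨?_, y, ⟨?_, hvy⟩, hyz⟩
      · rintro (h | h)
        · exact hz.1 h
        · exact hvz h.2
      · rintro rfl
        exact dIrrefl hD.1 _ hvy
    have hYZ := card_SS_disj Y Z hdisj
    have hq : (n : ℝ) / 4 ≤ Z.card := by
      refine le_trans ?_ hZc
      have : (1 : ℝ) / 4 ≤ 1 - (1 + β / 8) * p := by nlinarith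
      nlinarith
    have hg := hG2 Y Z (by
      rw [hYZ]
      push_cast
      calc 8 * (n : ℝ) / (β / 8) ^ 2 = 32 / (β / 8) ^ 2 * (n / 4) := by ring
        _ ≤ (p * (Y.card : ℝ)) * Z.card := mul_le_mul hs hq (by positivity) (by positivity)
        _ = _ := by ring)
    rw [hYZ] at hg
    push_cast at hg
    have hYpos : (0 : ℝ) < Y.card := by
      have : 0 < p * (Y.card : ℝ) := lt_of_lt_of_le (by positivity) hs
      exact pos_of_mul_pos_right this hp.le
    have hup : (((eF G ∩ SS Y Z).card : ℕ) : ℝ) ≤ Y.card * ((1 + β / 8 - κ) * p * n) := by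
      calc (((eF G ∩ SS Y Z).card : ℕ) : ℝ) ≤ ∑ y ∈ Y, ((iF D y).card : ℝ) := by
            exact_mod_cast arcs_disj hD Y Z hno
        _ ≤ ∑ y ∈ Y, ((1 + β / 8 - κ) * p * n) := by
            refine Finset.sum_le_sum fun y hy => ?_
            have hyH : y ∈ H := (Finset.mem_inter.1 hy).2
            have : κ * p * n ≤ (oF D y).card := by simpa [hH] using hyH
            linarith [hdeg y]
        _ = _ := by rw [Finset.sum_const, nsmul_eq_mul]
    have h1 : (1 - β / 8) * p * (Y.card * ((1 - (1 + β / 8) * p) * n)) ≤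
        Y.card * ((1 + β / 8 - κ) * p * n) := by
      refine le_trans ?_ (hg.trans hup)
      have : (0 : ℝ) ≤ 1 - β / 8 := by linarith
      gcongr
    have h2 : (1 - β / 8) * (1 - (1 + β / 8) * p) ≤ 1 + β / 8 - κ := by
      have hpos : (0 : ℝ) < Y.card * p * n := by positivity
      refine le_of_mul_le_mul_right ?_ hpos
      linarith
    nlinarith [mul_pos hp (mul_pos hβ hβ)]
  have hp1 : p ≤ 1 / 2 := by linarith
  have hβ1 : β ^ 2 ≤ 1 := by nlinarith
  -- basic size facts
  have hX : 10 ^ 6 < β ^ 4 * (p * n) := by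
    have h : β ^ 4 * (p ^ 2 * n) ≤ β ^ 4 * (p * n) := by
      have : p ^ 2 * n ≤ p * n := by nlinarith [mul_pos hp hn0]
      gcongr
    linarith
  have hX2 : 10 ^ 6 < β ^ 4 * n := by
    have h : β ^ 4 * (p * n) ≤ β ^ 4 * n := by
      have : p * n ≤ n := by nlinarith
      gcongr
    linarith
  have hX3 : 10 ^ 6 < β * n := by
    have h : β ^ 4 * n ≤ β * n := by
      have : β ^ 4 ≤ β := by
        have : β ^ 3 ≤ 1 := by nlinarith
        calc β ^ 4 = β ^ 3 * β := by ring
          _ ≤ 1 * β := by gcongr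
          _ = β := one_mul _
      gcongr
    linarith
  -- any set of size at least β n / 2 has many edges
  have hmany : ∀ A : Finset (Fin n), β * n / 2 ≤ (A.card : ℝ) →
      (1 - β / 8) * p * (A.card * (A.card - 1) / 2) ≤ (((eF G ∩ SS A A).card : ℕ) : ℝ) ∧
      β ^ 2 * n ^ 2 / 16 ≤ (A.card * (A.card - 1) / 2 : ℝ) := by
    intro A hA
    have h1 : β ^ 2 * n ^ 2 / 16 ≤ (A.card * (A.card - 1) / 2 : ℝ) := by
      have h2 : β * n / 4 ≤ (A.card - 1 : ℝ) := by linarith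
      have h3 : (β * n / 2) * (β * n / 4) ≤ A.card * (A.card - 1 : ℝ) :=
        mul_le_mul hA h2 (by positivity) (by positivity)
      linarith
    refine ⟨?_, h1⟩
    rw [← card_SS_self]
    apply hG2
    rw [card_SS_self]
    calc 8 * (n : ℝ) / (β / 8) ^ 2 ≤ p * (β ^ 2 * n ^ 2 / 16) := by
          rw [div_le_iff₀ (by positivity)]
          have : p * (β ^ 2 * n ^ 2 / 16) * (β / 8) ^ 2 = β ^ 4 * (p * n) * n / 1024 := by ring
          rw [this]
          nlinarith
      _ ≤ _ := by gcongr
  have hLle : (L.card : ℝ) ≤ (1 - β / 2) * n := by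
    by_contra! hLc
    obtain ⟨h1, _⟩ := hmany L (by nlinarith)
    have h2 : (((eF G ∩ SS L L).card : ℕ) : ℝ) ≤ L.card * (κ * p * n) := by
      calc (((eF G ∩ SS L L).card : ℕ) : ℝ) ≤ ∑ y ∈ L, ((oF D y ∩ L).card : ℝ) := by
            exact_mod_cast arcs_self hD L
        _ ≤ ∑ y ∈ L, (κ * p * n) := by
            refine Finset.sum_le_sum fun y hy => ?_
            have : (oF D y).card < κ * p * n := by simpa [hL] using hy
            have h3 : ((oF D y ∩ L).card : ℝ) ≤ (oF D y).card := by
              exact_mod_cast Finset.card_le_card Finset.inter_subset_left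
            linarith
        _ = _ := by rw [Finset.sum_const, nsmul_eq_mul]
    have hLpos : (0 : ℝ) < L.card := lt_of_le_of_lt (by nlinarith) hLc
    have h3 : (1 - β / 8) * (L.card - 1) ≤ 2 * κ * n := by
      have hpos : (0 : ℝ) < L.card * p := by positivity
      refine le_of_mul_le_mul_right ?_ hpos
      linarith
    have h4 : (1 - β / 8) * ((1 - β / 2) * n - 1) ≤ 2 * κ * n := by
      refine le_trans ?_ h3
      have : (0 : ℝ) ≤ 1 - β / 8 := by linarith
      gcongr
    nlinarith [mul_pos hβ (mul_pos hβ hn0)]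
  have hHge : β * n / 2 ≤ (H.card : ℝ) := by linarith
  obtain ⟨h1, h2⟩ := hmany H hHge
  have h3 : p * (((eF G ∩ SS H H).card : ℕ) : ℝ) ≤ n * (32 / (β / 8) ^ 2) := by
    calc p * (((eF G ∩ SS H H).card : ℕ) : ℝ) ≤ p * ∑ y ∈ H, ((oF D y ∩ H).card : ℝ) := by
          apply mul_le_mul_of_nonneg_left _ hp.le
          exact_mod_cast arcs_self hD H
      _ = ∑ y ∈ H, p * ((oF D y ∩ H).card : ℝ) := Finset.mul_sum _ _ _
      _ ≤ ∑ y ∈ H, (32 / (β / 8) ^ 2) := Finset.sum_le_sum fun y _ => (hfew y).le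
      _ = H.card * (32 / (β / 8) ^ 2) := by rw [Finset.sum_const, nsmul_eq_mul]
      _ ≤ _ := by
          have : (H.card : ℝ) ≤ n := by
            have : (0 : ℝ) ≤ L.card := by positivity
            linarith
          gcongr
  have h4 : p * ((1 / 2) * p * (β ^ 2 * n ^ 2 / 16)) ≤ n * (32 / (β / 8) ^ 2) := by
    refine le_trans (mul_le_mul_of_nonneg_left (le_trans ?_ h1) hp.le) h3
    have : (1 : ℝ) / 2 ≤ 1 - β / 8 := by linarith
    gcongr
  have h5 : n * (32 / (β / 8) ^ 2) * β ^ 2 = 2048 * n := by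
    field_simp
    norm_num
  have h6 := mul_le_mul_of_nonneg_right h4 (sq_nonneg β)
  rw [h5] at h6
  have h7 : p * ((1 / 2) * p * (β ^ 2 * n ^ 2 / 16)) * β ^ 2 = β ^ 4 * (p ^ 2 * n) * n / 32 := by
    ring
  rw [h7] at h6
  nlinarith

/-- if `p = p(n) ∈ [0,1]` satisfies `p(n)·(log n)^{1/3} → ∞` and
`limsup p < 1/2`, then a.a.s. every orientation of `G(n,p)` contains a Sullivan vertex. -/
theorem stmt_13 (p : ℕ → ℝ) (hp : ∀ n, p n ∈ Set.Icc (0 : ℝ) 1)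
    (hgrow : Tendsto (fun n : ℕ => p n * Real.log n ^ ((1 : ℝ)/3)) atTop atTop)
    (hlim : limsup p atTop < 1/2) :
    Tendsto (fun n => gnpProb n (p n) (fun G =>
        ∀ D : Fin n → Fin n → Prop, Orients D G → ∃ v, SullivanVertex D v))
      atTop (nhds 1) := by
  have hbdd : IsBoundedUnder (· ≤ ·) atTop p := ⟨1, by
    simp only [eventually_map]
    exact Eventually.of_forall fun n => (hp n).2⟩
  obtain ⟨b, hb1, hb2⟩ := exists_between hlim
  have hev : ∀ᶠ n in atTop, p n < b := eventually_lt_of_limsup_lt hb1 hbdd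
  have hb0 : 0 ≤ b := by
    obtain ⟨n, hn⟩ := hev.exists
    exact (hp n).1.trans hn.le
  set β : ℝ := 1 / 2 - b with hβ
  have hβ0 : 0 < β := by linarith
  have hβ2 : β ≤ 1 / 2 := by linarith
  -- p ≥ n^(-1/4)
  have hlog : ∀ᶠ n : ℕ in atTop, Real.log n ^ ((1 : ℝ) / 3) ≤ (n : ℝ) ^ ((1 : ℝ) / 4) := by
    have h := (isLittleO_log_rpow_atTop (r := (3 : ℝ) / 4) (by norm_num)).bound
      (c := 1) one_pos
    have h' := tendsto_natCast_atTop_atTop (R := ℝ) |>.eventually h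
    filter_upwards [h', eventually_ge_atTop 1] with n hn h1
    have h1' : (1 : ℝ) ≤ n := by exact_mod_cast h1
    have hl := Real.log_nonneg h1'
    rw [one_mul, Real.norm_of_nonneg hl, Real.norm_of_nonneg (by positivity)] at hn
    calc Real.log n ^ ((1 : ℝ) / 3) ≤ ((n : ℝ) ^ ((3 : ℝ) / 4)) ^ ((1 : ℝ) / 3) :=
          Real.rpow_le_rpow hl hn (by norm_num)
      _ = _ := by
          rw [← Real.rpow_mul (by positivity)]
          norm_num
  have hpn : ∀ᶠ n : ℕ in atTop, 1 ≤ p n * (n : ℝ) ^ ((1 : ℝ) / 4) := by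
    filter_upwards [hlog, hgrow.eventually_ge_atTop 1] with n h1 h2
    exact h2.trans (mul_le_mul_of_nonneg_left h1 (hp n).1)
  have hsq : ∀ᶠ n : ℕ in atTop, Real.sqrt n ≤ p n ^ 2 * n := by
    filter_upwards [hpn, eventually_ge_atTop 1] with n h1 h2
    have hx : ((n : ℝ) ^ ((1 : ℝ) / 4)) ^ 2 = Real.sqrt n := by
      rw [Real.sqrt_eq_rpow, ← Real.rpow_natCast, ← Real.rpow_mul (by positivity)]
      norm_num
    have hs : Real.sqrt n * Real.sqrt n = n := Real.mul_self_sqrt (by positivity)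
    have h3 : 1 ≤ p n ^ 2 * Real.sqrt n := by
      rw [← hx, ← mul_pow]
      exact one_le_pow₀ h1
    have h4 : 0 ≤ Real.sqrt n := Real.sqrt_nonneg _
    calc Real.sqrt n ≤ (p n ^ 2 * Real.sqrt n) * Real.sqrt n := by nlinarith
      _ = p n ^ 2 * n := by rw [mul_assoc, hs]
  have hsqrt : Tendsto (fun n : ℕ => Real.sqrt n) atTop atTop :=
    Real.tendsto_sqrt_atTop.comp tendsto_natCast_atTop_atTop
  -- error term
  set c : ℝ := (β / 8) ^ 2 / 4 with hc
  have hc0 : 0 < c := by positivity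
  have herr1 : Tendsto (fun n : ℕ => (n : ℝ) * Real.exp (-(c * Real.sqrt n))) atTop (nhds 0) := by
    have h := (tendsto_rpow_mul_exp_neg_mul_atTop_nhds_zero 2 c hc0).comp hsqrt
    refine h.congr fun n => ?_
    simp only [Function.comp]
    rw [Real.rpow_two, Real.sq_sqrt (by positivity), neg_mul]
  have herr2 : Tendsto (fun n : ℕ => (4 * Real.exp (-2)) ^ n) atTop (nhds 0) := by
    apply tendsto_pow_atTop_nhds_zero_of_lt_one (by positivity)
    have h2 : (4 : ℝ) < Real.exp 2 := by
      have h := Real.exp_one_gt_d9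
      have : Real.exp 2 = Real.exp 1 * Real.exp 1 := by rw [← Real.exp_add]; norm_num
      rw [this]
      nlinarith
    rw [Real.exp_neg, ← div_eq_mul_inv, div_lt_one (Real.exp_pos _)]
    exact h2
  have hlow : Tendsto (fun n : ℕ => 1 - ((n : ℝ) * Real.exp (-(c * Real.sqrt n)) +
      (4 * Real.exp (-2)) ^ n)) atTop (nhds 1) := by
    simpa using (tendsto_const_nhds (x := (1 : ℝ))).sub (herr1.add herr2)
  refine tendsto_of_tendsto_of_tendsto_of_le_of_le' hlow tendsto_const_nhds ?_ ?_
  · have hbig : ∀ᶠ n : ℕ in atTop, 10 ^ 6 / β ^ 4 < Real.sqrt n :=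
      hsqrt.eventually_gt_atTop _
    filter_upwards [hev, hsq, hbig, hpn, eventually_ge_atTop 1] with n h1 h2 h3 h4 h5
    have hp0 : 0 < p n := by
      rcases (hp n).1.lt_or_eq with h | h
      · exact h
      · rw [← h] at h4
        norm_num at h4
    rw [gnpProb_eq]
    refine le_trans ?_ ((good_prob (n := n) (ε := β / 8) (hp n) (by positivity) (by linarith)).trans
      (pr_mono (hp n) fun G hG D hD => determ hβ0 hβ2 hp0 (by linarith) ?_ hG hD))
    · have hle : Real.sqrt n ≤ p n * n := by
        have : p n ^ 2 * n ≤ p n * n := by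
          have hn : (0 : ℝ) ≤ n := by positivity
          have : p n ^ 2 ≤ p n := by nlinarith [(hp n).2]
          gcongr
        linarith
      have : c * Real.sqrt n ≤ (β / 8) ^ 2 * p n * n / 4 := by
        calc c * Real.sqrt n ≤ c * (p n * n) := by gcongr
          _ = _ := by rw [hc]; ring
      gcongr
    · rw [div_lt_iff₀ (by positivity)] at h3
      have : β ^ 4 * Real.sqrt n ≤ β ^ 4 * (p n ^ 2 * n) := by gcongr
      linarith
  · exact Eventually.of_forall fun n => by
      rw [gnpProb_eq]
      exact pr_le_one (hp n) _
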